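/- arXiv:2007.10475 — 2 statements merged into one kernel-verified Lean document; each statement's English description precedes it below -/
import Mathlib

section
/- There exists a constant $C>0$ such that for every function $g$ three times continuously differentiable on $[-1,1]$ with $g(-1)=g(1)=0$ and every $y \in (-1,1)$, one has $|g''(y)| \le C\, D(g)^{1/2}\left(1 + \left|\log\left(\frac{1+y}{1-y}\right)\right|^{1/2}\right)$. -/
open MeasureTheory Set
open scoped ENNReal

/-- Derivative on the interval `[-1, 1]`. -/
noncomputable def dI (f : ℝ → ℝ) : ℝ → ℝ := derivWithin f (Icc (-1) 1)

/-- The energy `E(g) = (1/2) ∫_{-1}^{1} g'(y)^2 dy`. -/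
noncomputable def energy (g : ℝ → ℝ) : ℝ :=
  (1/2) * ∫ y in Ioo (-1:ℝ) 1, (dI g y) ^ 2

/-- The dissipation `D(g) = 8 ∫_{-1}^{1} g''(y)^2 dy + (1/2) ∫_{-1}^{1} (1-y^2) g'''(y)^2 dy`. -/
noncomputable def dissipation (g : ℝ → ℝ) : ℝ :=
  8 * (∫ y in Ioo (-1:ℝ) 1, (dI (dI g) y) ^ 2)
    + (1/2) * ∫ y in Ioo (-1:ℝ) 1, (1 - y ^ 2) * (dI (dI (dI g)) y) ^ 2

/-!
The weight `1 - y²` is the reciprocal of the derivative of `artanh y = log ((1 + y) / (1 - y)) / 2`,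
so weighted Cauchy–Schwarz gives
`(g'' y - g'' a)² ≤ |artanh y - artanh a| * ∫ (1 - x²) g'''(x)² dx`.
A base point `a` in the middle half of the interval, where `|artanh| ≤ 1`, can be chosen with
`g''(a)²` at most the mean of `g''²` there.
-/

section WeightedCauchySchwarz

theorem sq_integral_le_integral_inv_mul_integral {α : Type*} [MeasurableSpace α] {μ : Measure α}
    {w k : α → ℝ} (hw_pos : ∀ᵐ x ∂μ, 0 < w x) (hw : Integrable (fun x ↦ (w x)⁻¹) μ)
    (hk : Integrable k μ) (hwk : Integrable (fun x ↦ w x * k x ^ 2) μ) :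
    (∫ x, k x ∂μ) ^ 2 ≤ (∫ x, (w x)⁻¹ ∂μ) * ∫ x, w x * k x ^ 2 ∂μ := by
  have quadratic_nonneg (t : ℝ) : 0 ≤ (∫ x, (w x)⁻¹ ∂μ) * (t * t) + (-2 * ∫ x, k x ∂μ) * t +
      ∫ x, w x * k x ^ 2 ∂μ := calc
    0 ≤ ∫ x, (t * t * (w x)⁻¹ + -2 * t * k x + w x * k x ^ 2) ∂μ := by
      refine integral_nonneg_of_ae ?_
      filter_upwards [hw_pos] with x hx
      have complete_square : t * t * (w x)⁻¹ + -2 * t * k x + w x * k x ^ 2 =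
          w x * (k x - t / w x) ^ 2 := by
        field_simp
        ring
      rw [complete_square, Pi.zero_apply]
      positivity
    _ = _ := by
      have h_sum : Integrable (fun x ↦ t * t * (w x)⁻¹ + -2 * t * k x) μ :=
        (hw.const_mul _).add (hk.const_mul _)
      rw [integral_add h_sum hwk,
        integral_add (hw.const_mul _) (hk.const_mul _), integral_const_mul, integral_const_mul]
      ring
  have discrim_nonpos := discrim_le_zero quadratic_nonneg
  unfold discrim at discrim_nonpos
  linarith

theorem sq_sub_le_abs_sub_mul_setIntegral {s : Set ℝ} (hs : s.OrdConnected) {h k Φ w : ℝ → ℝ}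
    (hw : ContinuousOn w s) (hw_pos : ∀ x ∈ s, 0 < w x)
    (hΦ : ∀ x ∈ s, HasDerivAt Φ (w x)⁻¹ x) (hk : ContinuousOn k s)
    (hh : ∀ x ∈ s, HasDerivAt h (k x) x) (hwk : IntegrableOn (fun x ↦ w x * k x ^ 2) s)
    {a b : ℝ} (ha : a ∈ s) (hb : b ∈ s) :
    (h b - h a) ^ 2 ≤ |Φ b - Φ a| * ∫ x in s, w x * k x ^ 2 := by
  wlog hab : a ≤ b generalizing a b
  · rw [← neg_sub (h a), neg_sq, abs_sub_comm]
    exact this hb ha (le_of_not_ge hab)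
  have huIcc : uIcc a b ⊆ s := hs.uIcc_subset ha hb
  have hIoc : Ioc a b ⊆ s := Ioc_subset_Icc_self.trans (hs.out ha hb)
  have hw_inv : IntervalIntegrable (fun x ↦ (w x)⁻¹) volume a b :=
    ((hw.inv₀ fun x hx ↦ (hw_pos x hx).ne').mono huIcc).intervalIntegrable
  have hk_int : IntervalIntegrable k volume a b := (hk.mono huIcc).intervalIntegrable
  have integral_k : ∫ x in Ioc a b, k x = h b - h a := by
    rw [← intervalIntegral.integral_of_le hab]
    exact intervalIntegral.integral_eq_sub_of_hasDerivAt (fun x hx ↦ hh x (huIcc hx)) hk_int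
  have integral_w_inv : ∫ x in Ioc a b, (w x)⁻¹ = Φ b - Φ a := by
    rw [← intervalIntegral.integral_of_le hab]
    exact intervalIntegral.integral_eq_sub_of_hasDerivAt (fun x hx ↦ hΦ x (huIcc hx)) hw_inv
  have integrand_nonneg (x : ℝ) (hx : x ∈ s) : 0 ≤ w x * k x ^ 2 :=
    mul_nonneg (hw_pos x hx).le (sq_nonneg _)
  calc (h b - h a) ^ 2 = (∫ x in Ioc a b, k x) ^ 2 := by rw [integral_k]
    _ ≤ (∫ x in Ioc a b, (w x)⁻¹) * ∫ x in Ioc a b, w x * k x ^ 2 :=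
      sq_integral_le_integral_inv_mul_integral
        (ae_restrict_of_forall_mem measurableSet_Ioc fun x hx ↦ hw_pos x (hIoc hx))
        hw_inv.1 hk_int.1 (hwk.mono_set hIoc)
    _ ≤ |Φ b - Φ a| * ∫ x in s, w x * k x ^ 2 := by
      rw [integral_w_inv]
      exact mul_le_mul (le_abs_self _)
        (setIntegral_mono_set hwk
          (ae_restrict_of_forall_mem hs.measurableSet integrand_nonneg) hIoc.eventuallyLE)
        (setIntegral_nonneg measurableSet_Ioc fun x hx ↦ integrand_nonneg x (hIoc hx))
        (abs_nonneg _)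

end WeightedCauchySchwarz

theorem exists_measureReal_mul_le_setIntegral {α : Type*} [MeasurableSpace α] {μ : Measure α}
    {s t : Set α} {f : α → ℝ} (hf : IntegrableOn f s μ) (hf_nonneg : 0 ≤ᵐ[μ.restrict s] f)
    (hts : t ⊆ s) (ht : μ t ≠ 0) (ht_top : μ t ≠ ∞) :
    ∃ x ∈ t, μ.real t * f x ≤ ∫ y in s, f y ∂μ := by
  obtain ⟨x, hx, hle⟩ := exists_le_setAverage ht ht_top (hf.mono_set hts)
  refine ⟨x, hx, ?_⟩
  calc μ.real t * f x ≤ μ.real t * ⨍ y in t, f y ∂μ := by gcongr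
    _ = ∫ y in t, f y ∂μ := measure_smul_setAverage f ht_top
    _ ≤ ∫ y in s, f y ∂μ := setIntegral_mono_set hf hf_nonneg hts.eventuallyLE

section Artanh

variable {y : ℝ}

theorem log_div_eq_two_mul_artanh (hy : y ∈ Icc (-1) 1) :
    Real.log ((1 + y) / (1 - y)) = 2 * Real.artanh y := by
  rw [Real.artanh_eq_half_log hy]
  ring

theorem one_sub_sq_pos (hy : y ∈ Ioo (-1) 1) : 0 < 1 - y ^ 2 := by
  nlinarith [hy.1, hy.2]

theorem hasDerivAt_artanh (hy : y ∈ Ioo (-1) 1) :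
    HasDerivAt Real.artanh (1 - y ^ 2)⁻¹ y := by
  have h_add : 1 + y ≠ 0 := by linarith [hy.1]
  have h_sub : 1 - y ≠ 0 := by linarith [hy.2]
  have artanh_eq : Real.artanh =ᶠ[nhds y] fun x ↦ 1 / 2 * Real.log ((1 + x) / (1 - x)) := by
    filter_upwards [Icc_mem_nhds hy.1 hy.2] with x hx using Real.artanh_eq_half_log hx
  have h_deriv := ((((hasDerivAt_id' y).const_add 1).fun_div
    ((hasDerivAt_id' y).const_sub 1) h_sub).log (div_ne_zero h_add h_sub)).const_mul (1 / 2)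
  refine (h_deriv.congr_of_eventuallyEq artanh_eq).congr_deriv ?_
  rw [show 1 - y ^ 2 = (1 + y) * (1 - y) by ring]
  field_simp
  ring

theorem abs_artanh_le_one (hy : y ∈ Icc (-(1 / 2) : ℝ) (1 / 2)) : |Real.artanh y| ≤ 1 := by
  have h_add : 0 < 1 + y := by linarith [hy.1]
  have h_sub : 0 < 1 - y := by linarith [hy.2]
  have h_ratio : (1 + y) / (1 - y) ≤ 3 := by
    rw [div_le_iff₀ h_sub]
    linarith [hy.2]
  have h_ratio_inv : ((1 + y) / (1 - y))⁻¹ ≤ 3 := by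
    rw [inv_div, div_le_iff₀ h_add]
    linarith [hy.1]
  have h_log := log_div_eq_two_mul_artanh (y := y) ⟨by linarith, by linarith⟩
  have log_le := Real.log_le_sub_one_of_pos (div_pos h_add h_sub)
  have le_log := Real.one_sub_inv_le_log_of_pos (div_pos h_add h_sub)
  exact abs_le.2 ⟨by linarith, by linarith⟩

end Artanh

theorem sq_le_setIntegral_sq_add_artanh_mul_setIntegral {h k : ℝ → ℝ}
    (hh : ∀ x ∈ Ioo (-1 : ℝ) 1, HasDerivAt h (k x) x) (hk : ContinuousOn k (Ioo (-1) 1))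
    (hh_int : IntegrableOn (fun x ↦ h x ^ 2) (Ioo (-1) 1))
    (hk_int : IntegrableOn (fun x ↦ (1 - x ^ 2) * k x ^ 2) (Ioo (-1) 1))
    {y : ℝ} (hy : y ∈ Ioo (-1) 1) :
    h y ^ 2 ≤ 2 * ((∫ x in Ioo (-1 : ℝ) 1, h x ^ 2) +
      (|Real.artanh y| + 1) * ∫ x in Ioo (-1 : ℝ) 1, (1 - x ^ 2) * k x ^ 2) := by
  have hsub : Icc (-(1 / 2) : ℝ) (1 / 2) ⊆ Ioo (-1) 1 :=
    Icc_subset_Ioo (by norm_num) (by norm_num)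
  have hvol : volume (Icc (-(1 / 2) : ℝ) (1 / 2)) = 1 := by
    rw [Real.volume_Icc]
    norm_num
  obtain ⟨a, ha, h_base⟩ := exists_measureReal_mul_le_setIntegral hh_int
    (.of_forall fun x ↦ sq_nonneg (h x)) hsub (by simp) (by simp)
  rw [measureReal_def, hvol, ENNReal.toReal_one, one_mul] at h_base
  have h_osc := sq_sub_le_abs_sub_mul_setIntegral ordConnected_Ioo (by fun_prop)
    (fun _ ↦ one_sub_sq_pos) (fun _ ↦ hasDerivAt_artanh) hk hh hk_int (hsub ha) hy
  have h_artanh : |Real.artanh y - Real.artanh a| ≤ |Real.artanh y| + 1 :=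
    (abs_sub _ _).trans (by gcongr; exact abs_artanh_le_one ha)
  have hk_nonneg : 0 ≤ ∫ x in Ioo (-1 : ℝ) 1, (1 - x ^ 2) * k x ^ 2 :=
    setIntegral_nonneg measurableSet_Ioo fun x hx ↦
      mul_nonneg (one_sub_sq_pos hx).le (sq_nonneg _)
  calc h y ^ 2 = (h a + (h y - h a)) ^ 2 := by rw [add_sub_cancel]
    _ ≤ 2 * (h a ^ 2 + (h y - h a) ^ 2) := add_sq_le
    _ ≤ _ := by
      gcongr
      exact h_osc.trans (by gcongr)

section IteratedDerivatives

variable {f : ℝ → ℝ} {y : ℝ} {m n : WithTop ℕ∞}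

theorem dI_eq_deriv (hy : y ∈ Ioo (-1) 1) : dI f y = deriv f y :=
  derivWithin_of_mem_nhds (Icc_mem_nhds hy.1 hy.2)

theorem hasDerivAt_dI (hf : DifferentiableAt ℝ f y) (hy : y ∈ Ioo (-1) 1) :
    HasDerivAt f (dI f y) y :=
  dI_eq_deriv (f := f) hy ▸ hf.hasDerivAt

theorem contDiffOn_dI_Ioo (hf : ContDiffOn ℝ n f (Ioo (-1) 1)) (hmn : m + 1 ≤ n) :
    ContDiffOn ℝ m (dI f) (Ioo (-1) 1) :=
  (hf.deriv_of_isOpen isOpen_Ioo hmn).congr fun _ ↦ dI_eq_deriv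

theorem contDiffOn_dI_Icc (hf : ContDiffOn ℝ n f (Icc (-1) 1)) (hmn : m + 1 ≤ n) :
    ContDiffOn ℝ m (dI f) (Icc (-1) 1) :=
  hf.derivWithin (uniqueDiffOn_Icc (by norm_num)) hmn

theorem integrableOn_dI_dI_sq (hf : ContDiffOn ℝ 2 f (Icc (-1) 1)) :
    IntegrableOn (fun x ↦ dI (dI f) x ^ 2) (Ioo (-1) 1) := by
  have h₁ : ContDiffOn ℝ 1 (dI f) (Icc (-1) 1) := contDiffOn_dI_Icc hf (by norm_num)
  have h₂ : ContDiffOn ℝ 0 (dI (dI f)) (Icc (-1) 1) := contDiffOn_dI_Icc h₁ (by norm_num)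
  exact (h₂.continuousOn.pow 2).integrableOn_Icc.mono_set Ioo_subset_Icc_self

theorem integrableOn_one_sub_sq_mul_dI_dI_dI_sq (hf : ContDiffOn ℝ 3 f (Icc (-1) 1)) :
    IntegrableOn (fun x ↦ (1 - x ^ 2) * dI (dI (dI f)) x ^ 2) (Ioo (-1) 1) := by
  have h₁ : ContDiffOn ℝ 2 (dI f) (Icc (-1) 1) := contDiffOn_dI_Icc hf (by norm_num)
  exact (integrableOn_dI_dI_sq h₁).continuousOn_mul_of_subset (by fun_prop) isCompact_Icc
    measurableSet_Ioo Ioo_subset_Icc_self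

end IteratedDerivatives

theorem dI_dI_sq_le_dissipation_mul {g : ℝ → ℝ} (hg : ContDiffOn ℝ 3 g (Ioo (-1) 1))
    (hg₂ : IntegrableOn (fun x ↦ dI (dI g) x ^ 2) (Ioo (-1) 1))
    (hg₃ : IntegrableOn (fun x ↦ (1 - x ^ 2) * dI (dI (dI g)) x ^ 2) (Ioo (-1) 1))
    {y : ℝ} (hy : y ∈ Ioo (-1) 1) :
    dI (dI g) y ^ 2 ≤ 4 * (dissipation g * (1 + |Real.log ((1 + y) / (1 - y))|)) := by
  have h₁ : ContDiffOn ℝ 2 (dI g) (Ioo (-1) 1) := contDiffOn_dI_Ioo hg (by norm_num)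
  have h₂ : ContDiffOn ℝ 1 (dI (dI g)) (Ioo (-1) 1) := contDiffOn_dI_Ioo h₁ (by norm_num)
  have h₃ : ContDiffOn ℝ 0 (dI (dI (dI g))) (Ioo (-1) 1) := contDiffOn_dI_Ioo h₂ (by norm_num)
  have h_deriv (x : ℝ) (hx : x ∈ Ioo (-1 : ℝ) 1) :
      HasDerivAt (dI (dI g)) (dI (dI (dI g)) x) x :=
    hasDerivAt_dI ((h₂.differentiableOn one_ne_zero).differentiableAt (isOpen_Ioo.mem_nhds hx)) hx
  have h_bound :=
    sq_le_setIntegral_sq_add_artanh_mul_setIntegral h_deriv h₃.continuousOn hg₂ hg₃ hy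
  rw [log_div_eq_two_mul_artanh (Ioo_subset_Icc_self hy), abs_mul, abs_two, dissipation]
  set P := ∫ x in Ioo (-1 : ℝ) 1, dI (dI g) x ^ 2
  set Q := ∫ x in Ioo (-1 : ℝ) 1, (1 - x ^ 2) * dI (dI (dI g)) x ^ 2
  have hP : 0 ≤ P := integral_nonneg fun x ↦ sq_nonneg _
  have hPA : 0 ≤ P * |Real.artanh y| := by positivity
  have hQ : 0 ≤ Q := setIntegral_nonneg measurableSet_Ioo fun x hx ↦
    mul_nonneg (one_sub_sq_pos hx).le (sq_nonneg _)
  have hQA : 0 ≤ Q * |Real.artanh y| := by positivity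
  linarith

theorem second_deriv_pointwise_log_bound_general {g : ℝ → ℝ}
    (hg : ContDiffOn ℝ 3 g (Ioo (-1) 1))
    (hg₂ : IntegrableOn (fun x ↦ dI (dI g) x ^ 2) (Ioo (-1) 1))
    (hg₃ : IntegrableOn (fun x ↦ (1 - x ^ 2) * dI (dI (dI g)) x ^ 2) (Ioo (-1) 1))
    {y : ℝ} (hy : y ∈ Ioo (-1) 1) :
    |dI (dI g) y| ≤ 2 * dissipation g ^ ((1 : ℝ) / 2) *
      (1 + |Real.log ((1 + y) / (1 - y))| ^ ((1 : ℝ) / 2)) := by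
  rw [← Real.sqrt_eq_rpow, ← Real.sqrt_eq_rpow]
  set L := |Real.log ((1 + y) / (1 - y))|
  have hL : 0 ≤ L := abs_nonneg _
  calc |dI (dI g) y| ≤ √(4 * (dissipation g * (1 + L))) :=
      Real.abs_le_sqrt (dI_dI_sq_le_dissipation_mul hg hg₂ hg₃ hy)
    _ = 2 * √(dissipation g) * √(1 + L) := by
      rw [Real.sqrt_mul zero_le_four, Real.sqrt_mul' _ (by positivity),
        show (4 : ℝ) = 2 ^ 2 by norm_num, Real.sqrt_sq zero_le_two, mul_assoc]
    _ ≤ 2 * √(dissipation g) * (1 + √L) := by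
      gcongr
      rw [Real.sqrt_le_left (by positivity)]
      nlinarith [Real.sq_sqrt hL, Real.sqrt_nonneg L]

/-- **Inequality (3.22)**: pointwise logarithmic bound on the second derivative,
`|g''(y)| ≲ D(g)^{1/2} (1 + |log((1+y)/(1-y))|^{1/2})` for `y ∈ (-1, 1)`. -/
theorem second_deriv_pointwise_log_bound :
    ∃ C > (0:ℝ), ∀ g : ℝ → ℝ, ContDiffOn ℝ 3 g (Icc (-1) 1) →
      g (-1) = 0 → g 1 = 0 →
      ∀ y ∈ Ioo (-1:ℝ) 1, |dI (dI g) y| ≤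
        C * dissipation g ^ ((1:ℝ)/2) *
          (1 + |Real.log ((1 + y) / (1 - y))| ^ ((1:ℝ)/2)) :=
  ⟨2, two_pos, fun _ hg _ _ _ hy ↦ second_deriv_pointwise_log_bound_general
    (hg.mono Ioo_subset_Icc_self) (integrableOn_dI_dI_sq (hg.of_le (by norm_num)))
    (integrableOn_one_sub_sq_mul_dI_dI_dI_sq hg) hy⟩
end

section
/- For every function $g$ three times continuously differentiable on $[-1,1]$ with $g(-1)=g(1)=0$, one has the identity $\mathbf{I}_4 = -\frac{120}{11}\,\mathbf{I}_7 - \frac{15}{2}\,\mathbf{I}_8 - \frac{60}{7}\,\mathbf{I}_9$, where $\mathbf{I}_4 = 30\int_{-1}^{1} y\,(1+g)^4\, g'\, (g'')^2\, dy$, $\mathbf{I}_7 = -\frac{11}{2}\int_{-1}^{1} (1-y^2)(1+g)^3 (g')^2 (g'')^2\, dy$, $\mathbf{I}_8 = -2\int_{-1}^{1} (1-y^2)(1+g)^4 (g'')^3\, dy$, and $\mathbf{I}_9 = -\frac{7}{2}\int_{-1}^{1} (1-y^2)(1+g)^4\, g'\, g'''\, g''\, dy$. -/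
open MeasureTheory Set

/-- `I₄ = 30 ∫ y (1+g)⁴ g' (g'')² dy`. -/
noncomputable def I4 (g : ℝ → ℝ) : ℝ :=
  30 * ∫ y in Ioo (-1:ℝ) 1, y * (1 + g y) ^ 4 * dI g y * (dI (dI g) y) ^ 2

/-- `I₇ = -(11/2) ∫ (1-y²) (1+g)³ (g')² (g'')² dy`. -/
noncomputable def I7 (g : ℝ → ℝ) : ℝ :=
  -(11/2) * ∫ y in Ioo (-1:ℝ) 1, (1 - y ^ 2) * (1 + g y) ^ 3 * (dI g y) ^ 2 * (dI (dI g) y) ^ 2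

/-- `I₈ = -2 ∫ (1-y²) (1+g)⁴ (g'')³ dy`. -/
noncomputable def I8 (g : ℝ → ℝ) : ℝ :=
  -2 * ∫ y in Ioo (-1:ℝ) 1, (1 - y ^ 2) * (1 + g y) ^ 4 * (dI (dI g) y) ^ 3

/-- `I₉ = -(7/2) ∫ (1-y²) (1+g)⁴ g' g''' g'' dy`. -/
noncomputable def I9 (g : ℝ → ℝ) : ℝ :=
  -(7/2) * ∫ y in Ioo (-1:ℝ) 1,
    (1 - y ^ 2) * (1 + g y) ^ 4 * dI g y * dI (dI (dI g)) y * dI (dI g) y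

/-!
The weight `1 - y²` vanishes at `±1` and has derivative `-2y`, so integrating by parts against the
flux `(1 + g)⁴ g' (g'')²` leaves no boundary term and turns `∫ y (1 + g)⁴ g' (g'')²` into half the
integral of `1 - y²` times the derivative of the flux. By the product rule that derivative is
`4 (1 + g)³ (g')² (g'')² + (1 + g)⁴ (g'')³ + 2 (1 + g)⁴ g' g'' g'''`, whose three terms give `I₇`,
`I₈` and `I₉`.
-/

theorem hasDerivWithinAt_pow_mul_mul_sq {𝕜 : Type*} [NontriviallyNormedField 𝕜]
    {u v w : 𝕜 → 𝕜} {z x : 𝕜} {s : Set 𝕜} (hu : HasDerivWithinAt u (v x) s x)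
    (hv : HasDerivWithinAt v (w x) s x) (hw : HasDerivWithinAt w z s x) (n : ℕ) :
    HasDerivWithinAt (fun y ↦ u y ^ n * v y * w y ^ 2)
      (n * (u x ^ (n - 1) * v x ^ 2 * w x ^ 2) + u x ^ n * w x ^ 3 +
        2 * (u x ^ n * v x * z * w x)) s x := by
  refine (((hu.fun_pow n).fun_mul hv).fun_mul (hw.fun_pow 2)).congr_deriv ?_
  simp only [Nat.add_one_sub_one, pow_one, Nat.cast_ofNat]
  ring

theorem integral_deriv_mul_eq_neg_integral_mul_deriv {A : Type*} [NormedRing A]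
    [NormedAlgebra ℝ A] [CompleteSpace A] {a b : ℝ} {u u' v v' : ℝ → A}
    (hu : ∀ x ∈ uIcc a b, HasDerivWithinAt u (u' x) (uIcc a b) x)
    (hv : ∀ x ∈ uIcc a b, HasDerivWithinAt v (v' x) (uIcc a b) x)
    (hu' : IntervalIntegrable u' volume a b) (hv' : IntervalIntegrable v' volume a b)
    (hua : u a = 0) (hub : u b = 0) :
    ∫ x in a..b, u' x * v x = -∫ x in a..b, u x * v' x := by
  rw [intervalIntegral.integral_mul_deriv_eq_deriv_mul_of_hasDerivWithinAt hu hv hu' hv', hua, hub]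
  simp only [zero_mul, sub_zero, zero_sub, neg_neg]

theorem integral_deriv_mul_pow_mul_mul_sq {a b : ℝ} {ρ ρ' u u₁ u₂ u₃ : ℝ → ℝ}
    (hρ : ∀ x ∈ uIcc a b, HasDerivWithinAt ρ (ρ' x) (uIcc a b) x)
    (hρ' : IntervalIntegrable ρ' volume a b) (hρa : ρ a = 0) (hρb : ρ b = 0)
    (hu : ∀ x ∈ uIcc a b, HasDerivWithinAt u (u₁ x) (uIcc a b) x)
    (hu₁ : ∀ x ∈ uIcc a b, HasDerivWithinAt u₁ (u₂ x) (uIcc a b) x)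
    (hu₂ : ∀ x ∈ uIcc a b, HasDerivWithinAt u₂ (u₃ x) (uIcc a b) x)
    (hu₃ : IntervalIntegrable u₃ volume a b) (n : ℕ) :
    ∫ x in a..b, ρ' x * (u x ^ n * u₁ x * u₂ x ^ 2) =
      -(n * (∫ x in a..b, ρ x * (u x ^ (n - 1) * u₁ x ^ 2 * u₂ x ^ 2)) +
        (∫ x in a..b, ρ x * (u x ^ n * u₂ x ^ 3)) +
        2 * ∫ x in a..b, ρ x * (u x ^ n * u₁ x * u₃ x * u₂ x)) := by
  have cρ : ContinuousOn ρ (uIcc a b) := HasDerivWithinAt.continuousOn hρ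
  have cu : ContinuousOn u (uIcc a b) := HasDerivWithinAt.continuousOn hu
  have cu₁ : ContinuousOn u₁ (uIcc a b) := HasDerivWithinAt.continuousOn hu₁
  have cu₂ : ContinuousOn u₂ (uIcc a b) := HasDerivWithinAt.continuousOn hu₂
  have int₁ : IntervalIntegrable (fun x ↦ u x ^ (n - 1) * u₁ x ^ 2 * u₂ x ^ 2) volume a b :=
    ContinuousOn.intervalIntegrable (by fun_prop)
  have int₂ : IntervalIntegrable (fun x ↦ u x ^ n * u₂ x ^ 3) volume a b :=
    ContinuousOn.intervalIntegrable (by fun_prop)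
  have int₃ : IntervalIntegrable (fun x ↦ u x ^ n * u₁ x * u₃ x * u₂ x) volume a b :=
    (hu₃.continuousOn_mul (by fun_prop)).mul_continuousOn cu₂
  have ρint₁ := int₁.continuousOn_mul cρ
  have ρint₂ := int₂.continuousOn_mul cρ
  have ρint₃ := int₃.continuousOn_mul cρ
  rw [integral_deriv_mul_eq_neg_integral_mul_deriv hρ
    (fun x hx ↦ hasDerivWithinAt_pow_mul_mul_sq (hu x hx) (hu₁ x hx) (hu₂ x hx) n)
    hρ' (((int₁.const_mul n).add int₂).add (int₃.const_mul 2)) hρa hρb]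
  simp only [mul_add, mul_left_comm (ρ _) (n : ℝ), mul_left_comm (ρ _) 2]
  rw [intervalIntegral.integral_add ((ρint₁.const_mul n).add ρint₂) (ρint₃.const_mul 2),
    intervalIntegral.integral_add (ρint₁.const_mul n) ρint₂,
    intervalIntegral.integral_const_mul, intervalIntegral.integral_const_mul]

theorem setIntegral_Ioo_eq_intervalIntegral {E : Type*} [NormedAddCommGroup E] [NormedSpace ℝ E]
    {a b : ℝ} (hab : a ≤ b) (f : ℝ → E) : ∫ x in Ioo a b, f x = ∫ x in a..b, f x := by
  rw [intervalIntegral.integral_of_le hab, integral_Ioc_eq_integral_Ioo]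

theorem contDiffOn_dI {f : ℝ → ℝ} {m n : WithTop ℕ∞} (hf : ContDiffOn ℝ n f (Icc (-1) 1))
    (hmn : m + 1 ≤ n) : ContDiffOn ℝ m (dI f) (Icc (-1) 1) :=
  hf.derivWithin (uniqueDiffOn_Icc (by norm_num)) hmn

theorem hasDerivWithinAt_dI {f : ℝ → ℝ} {y : ℝ} (hf : DifferentiableOn ℝ f (Icc (-1) 1))
    (hy : y ∈ Icc (-1) 1) : HasDerivWithinAt f (dI f y) (Icc (-1) 1) y :=
  (hf y hy).hasDerivWithinAt

theorem integral_id_mul_one_add_pow_mul_dI_mul_dI_sq {g : ℝ → ℝ}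
    (hg : ContDiffOn ℝ 3 g (Icc (-1) 1)) (n : ℕ) :
    ∫ y in Ioo (-1 : ℝ) 1, y * (1 + g y) ^ n * dI g y * (dI (dI g) y) ^ 2 =
      (n : ℝ) / 2 * (∫ y in Ioo (-1 : ℝ) 1,
        (1 - y ^ 2) * (1 + g y) ^ (n - 1) * (dI g y) ^ 2 * (dI (dI g) y) ^ 2) +
      1 / 2 * (∫ y in Ioo (-1 : ℝ) 1, (1 - y ^ 2) * (1 + g y) ^ n * (dI (dI g) y) ^ 3) +
      ∫ y in Ioo (-1 : ℝ) 1,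
        (1 - y ^ 2) * (1 + g y) ^ n * dI g y * dI (dI (dI g)) y * dI (dI g) y := by
  have hI : uIcc (-1 : ℝ) 1 = Icc (-1) 1 := uIcc_of_le (by norm_num)
  have hg₁ : ContDiffOn ℝ 2 (dI g) (Icc (-1) 1) := contDiffOn_dI hg (by norm_num)
  have hg₂ : ContDiffOn ℝ 1 (dI (dI g)) (Icc (-1) 1) := contDiffOn_dI hg₁ (by norm_num)
  have hg₃ : ContDiffOn ℝ 0 (dI (dI (dI g))) (Icc (-1) 1) := contDiffOn_dI hg₂ (by norm_num)
  have hweight (y : ℝ) : HasDerivAt (fun y : ℝ ↦ 1 - y ^ 2) (-2 * y) y := by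
    simpa using (hasDerivAt_pow 2 y).const_sub 1
  have parts := integral_deriv_mul_pow_mul_mul_sq (a := -1) (b := 1) (u := fun y ↦ 1 + g y)
    (fun y _ ↦ (hweight y).hasDerivWithinAt)
    (Continuous.intervalIntegrable (by fun_prop) _ _) (by norm_num) (by norm_num)
    (hI ▸ fun y hy ↦ (hasDerivWithinAt_dI (hg.differentiableOn (by norm_num)) hy).const_add 1)
    (hI ▸ fun y hy ↦ hasDerivWithinAt_dI (hg₁.differentiableOn (by norm_num)) hy)
    (hI ▸ fun y hy ↦ hasDerivWithinAt_dI (hg₂.differentiableOn (by norm_num)) hy)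
    (hg₃.continuousOn.intervalIntegrable_of_Icc (by norm_num)) n
  simp only [mul_assoc, intervalIntegral.integral_const_mul] at parts
  simp only [setIntegral_Ioo_eq_intervalIntegral (show (-1 : ℝ) ≤ 1 by norm_num), mul_assoc]
  linarith

theorem I4_identity_general {g : ℝ → ℝ} (hg : ContDiffOn ℝ 3 g (Icc (-1) 1)) :
    I4 g = -(120/11) * I7 g - (15/2) * I8 g - (60/7) * I9 g := by
  rw [I4, I7, I8, I9, integral_id_mul_one_add_pow_mul_dI_mul_dI_sq hg 4]
  push_cast
  ring

/-- **Identity (4.10)**: `I₄ = -(120/11) I₇ - (15/2) I₈ - (60/7) I₉`. -/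
theorem I4_identity (g : ℝ → ℝ) (hg : ContDiffOn ℝ 3 g (Icc (-1) 1))
    (hg1 : g (-1) = 0) (hg2 : g 1 = 0) :
    I4 g = -(120/11) * I7 g - (15/2) * I8 g - (60/7) * I9 g :=
  I4_identity_general hg
end
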